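/- Let Ω, β : ℝ → ℝ³, and let R, R̂ : ℝ → ℝ^{3×3} be differentiable with R(t), R̂(t) ∈ SO(3), R′(t) = R(t)·[Ω(t)]×, and R̂′(t) = R̂(t)·[Ω(t) + β(t)]× for all t. Set R̃(t) := R(t)ᵀR̂(t). Then R̃′(t) = R̃(t)[Ω(t)]× − [Ω(t)]×R̃(t) + R̃(t)[β(t)]×, and the normalized Euclidean distance satisfies d/dt ((1/4)Tr(I₃ − R̃(t))) = (1/2)·⟨vex(P_a(R̃(t))), β(t)⟩. -/

import Mathlib

/-!
The Leibniz rule for `R̃ = RᵀR̂`, together with `[Ω]×ᵀ = -[Ω]×` and the additivity of `x ↦ [x]×`,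
gives the equation for `R̃`. Under the trace the commutator `R̃[Ω]× - [Ω]×R̃` vanishes, and only the
antisymmetric part `P_a(R̃) = [vex(P_a(R̃))]×` of `R̃` pairs nontrivially with `[β]×`, so that
`Tr(R̃[β]×) = Tr([vex(P_a(R̃))]× [β]×) = -2⟨vex(P_a(R̃)), β⟩`.
-/

open Matrix

noncomputable section

/-- The skew-symmetric matrix `[x]×` associated to `x ∈ ℝ³`. -/
def skew (x : Fin 3 → ℝ) : Matrix (Fin 3) (Fin 3) ℝ :=
  !![0, -x 2, x 1; x 2, 0, -x 0; -x 1, x 0, 0]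

/-- The anti-symmetric projection `P_a(A) = (A - Aᵀ)/2`. -/
def Pa (A : Matrix (Fin 3) (Fin 3) ℝ) : Matrix (Fin 3) (Fin 3) ℝ :=
  (1/2 : ℝ) • (A - Aᵀ)

/-- `vex(P_a(A)) = (1/2)(A₃₂−A₂₃, A₁₃−A₃₁, A₂₁−A₁₂)`. -/
def vexPa (A : Matrix (Fin 3) (Fin 3) ℝ) : Fin 3 → ℝ :=
  ![(1/2) * (A 2 1 - A 1 2), (1/2) * (A 0 2 - A 2 0), (1/2) * (A 1 0 - A 0 1)]

/-- Normalized Euclidean distance `‖A‖_I = (1/4)Tr(I₃ − A)`. -/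
def normI (A : Matrix (Fin 3) (Fin 3) ℝ) : ℝ :=
  (1/4) * (1 - A).trace

attribute [local instance] Matrix.normedAddCommGroup Matrix.normedSpace

section MatrixCurves

variable {𝕜 : Type*} [NontriviallyNormedField 𝕜] {l m n : Type*} {t : 𝕜}

section TopologicalModule

variable {E : Type*} [AddCommGroup E] [Module 𝕜 E] [TopologicalSpace E] [ContinuousSMul 𝕜 E]
  {F : 𝕜 → Matrix m n E} {F' : Matrix m n E}

theorem hasDerivAt_matrix_iff :
    HasDerivAt F F' t ↔ ∀ i j, HasDerivAt (fun s => F s i j) (F' i j) t := by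
  simp only [HasDerivAt, HasDerivAtFilter, hasFDerivAtFilter_iff_isLittleOTVS]
  exact Asymptotics.isLittleOTVS_pi.trans <| forall_congr' fun _ => Asymptotics.isLittleOTVS_pi

theorem hasDerivAt_matrix_transpose (hF : HasDerivAt F F' t) :
    HasDerivAt (fun s => (F s)ᵀ) F'ᵀ t :=
  hasDerivAt_matrix_iff.2 fun i j => hasDerivAt_matrix_iff.1 hF j i

end TopologicalModule

theorem hasDerivAt_matrix_trace [Fintype n] {E : Type*} [NormedAddCommGroup E] [NormedSpace 𝕜 E]
    {F : 𝕜 → Matrix n n E} {F' : Matrix n n E} (hF : HasDerivAt F F' t) :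
    HasDerivAt (fun s => (F s).trace) F'.trace t :=
  HasDerivAt.fun_sum fun i _ => hasDerivAt_matrix_iff.1 hF i i

theorem hasDerivAt_matrix_mul [Fintype m] {𝔸 : Type*} [NormedRing 𝔸] [NormedAlgebra 𝕜 𝔸]
    {F : 𝕜 → Matrix l m 𝔸} {F' : Matrix l m 𝔸} {G : 𝕜 → Matrix m n 𝔸} {G' : Matrix m n 𝔸}
    (hF : HasDerivAt F F' t) (hG : HasDerivAt G G' t) :
    HasDerivAt (fun s => F s * G s) (F' * G t + F t * G') t := by
  rw [hasDerivAt_matrix_iff] at *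
  intro i j
  simp only [Matrix.add_apply, mul_apply, ← Finset.sum_add_distrib]
  exact HasDerivAt.fun_sum fun k _ => (hF i k).fun_mul (hG k j)

theorem hasDerivAt_transpose_mul_of_transpose_eq_neg [Fintype m] [Fintype n] {𝔸 : Type*}
    [NormedCommRing 𝔸] [NormedAlgebra 𝕜 𝔸] {F G : 𝕜 → Matrix m n 𝔸} {A B : Matrix n n 𝔸}
    (hA : Aᵀ = -A) (hF : HasDerivAt F (F t * A) t) (hG : HasDerivAt G (G t * (A + B)) t) :
    HasDerivAt (fun s => (F s)ᵀ * G s)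
      ((F t)ᵀ * G t * A - A * ((F t)ᵀ * G t) + (F t)ᵀ * G t * B) t := by
  refine (hasDerivAt_matrix_mul (hasDerivAt_matrix_transpose hF) hG).congr_deriv ?_
  simp only [transpose_mul, hA, Matrix.neg_mul, Matrix.mul_add, Matrix.mul_assoc]
  abel

end MatrixCurves

theorem trace_transpose_mul_of_transpose_eq_neg {n α : Type*} [Fintype n] [CommRing α]
    (A : Matrix n n α) {B : Matrix n n α} (hB : Bᵀ = -B) :
    (Aᵀ * B).trace = -(A * B).trace := by
  rw [← trace_transpose, transpose_mul, transpose_transpose, hB, neg_mul, trace_neg,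
    trace_mul_comm]

theorem skew_add (x y : Fin 3 → ℝ) : skew (x + y) = skew x + skew y := by
  ext i j
  fin_cases i <;> fin_cases j <;> simp [skew, add_comm]

theorem transpose_skew (x : Fin 3 → ℝ) : (skew x)ᵀ = -skew x := by
  ext i j
  fin_cases i <;> fin_cases j <;> simp [skew]

theorem trace_skew_mul_skew (x y : Fin 3 → ℝ) : (skew x * skew y).trace = -2 * (x ⬝ᵥ y) := by
  simp only [skew, trace_fin_three, mul_apply, dotProduct, Fin.sum_univ_three, of_apply, cons_val]
  ring

theorem skew_vexPa (A : Matrix (Fin 3) (Fin 3) ℝ) : skew (vexPa A) = Pa A := by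
  ext i j
  fin_cases i <;> fin_cases j <;> simp [skew, vexPa, Pa] <;> ring

theorem trace_Pa_mul_of_transpose_eq_neg (A : Matrix (Fin 3) (Fin 3) ℝ)
    {B : Matrix (Fin 3) (Fin 3) ℝ} (hB : Bᵀ = -B) : (Pa A * B).trace = (A * B).trace := by
  rw [Pa, smul_mul, sub_mul, trace_smul, trace_sub,
    trace_transpose_mul_of_transpose_eq_neg A hB, smul_eq_mul]
  ring

theorem trace_mul_skew (A : Matrix (Fin 3) (Fin 3) ℝ) (x : Fin 3 → ℝ) :
    (A * skew x).trace = -2 * (vexPa A ⬝ᵥ x) := by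
  rw [← trace_Pa_mul_of_transpose_eq_neg A (transpose_skew x), ← skew_vexPa, trace_skew_mul_skew]

theorem hasDerivAt_normI {F : ℝ → Matrix (Fin 3) (Fin 3) ℝ} {F' : Matrix (Fin 3) (Fin 3) ℝ}
    {t : ℝ} (hF : HasDerivAt F F' t) :
    HasDerivAt (fun s => normI (F s)) (-(1 / 4) * F'.trace) t := by
  refine ((hasDerivAt_matrix_trace (hF.const_sub 1)).const_mul (1 / 4)).congr_deriv ?_
  rw [trace_neg, mul_neg, neg_mul]

theorem Rtilde_and_normI_dynamics_general {R Rh : ℝ → Matrix (Fin 3) (Fin 3) ℝ} {t : ℝ}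
    {ω b : Fin 3 → ℝ} (hR : HasDerivAt R (R t * skew ω) t)
    (hRh : HasDerivAt Rh (Rh t * skew (ω + b)) t) :
    HasDerivAt (fun s => (R s)ᵀ * Rh s)
        ((R t)ᵀ * Rh t * skew ω - skew ω * ((R t)ᵀ * Rh t) + (R t)ᵀ * Rh t * skew b) t ∧
      HasDerivAt (fun s => normI ((R s)ᵀ * Rh s)) (1 / 2 * (vexPa ((R t)ᵀ * Rh t) ⬝ᵥ b)) t := by
  rw [skew_add] at hRh
  have hRtilde := hasDerivAt_transpose_mul_of_transpose_eq_neg (transpose_skew ω) hR hRh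
  refine ⟨hRtilde, (hasDerivAt_normI hRtilde).congr_deriv ?_⟩
  rw [trace_add, trace_sub, trace_mul_comm (skew ω), sub_self, zero_add, trace_mul_skew]
  ring

/-- eqs. (27)–(28), noise-free content: if `R, R̂ ∈ SO(3)` evolve as
`Ṙ = R[Ω]×` and `R̂̇ = R̂[Ω+β]×`, then `R̃ = RᵀR̂` satisfies
`R̃′ = R̃[Ω]× − [Ω]×R̃ + R̃[β]×` and
`(d/dt)((1/4)Tr(I₃ − R̃)) = (1/2)⟨vex(P_a(R̃)), β⟩`. -/
theorem Rtilde_and_normI_dynamics (Ω β : ℝ → Fin 3 → ℝ)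
    (R Rh : ℝ → Matrix (Fin 3) (Fin 3) ℝ)
    (hSO : ∀ t, (R t)ᵀ * R t = 1 ∧ R t * (R t)ᵀ = 1 ∧ (R t).det = 1)
    (hSOh : ∀ t, (Rh t)ᵀ * Rh t = 1 ∧ Rh t * (Rh t)ᵀ = 1 ∧ (Rh t).det = 1)
    (hder : ∀ t, HasDerivAt R (R t * skew (Ω t)) t)
    (hderh : ∀ t, HasDerivAt Rh (Rh t * skew (Ω t + β t)) t) :
    (∀ t, HasDerivAt (fun s => (R s)ᵀ * Rh s)
        ((R t)ᵀ * Rh t * skew (Ω t) - skew (Ω t) * ((R t)ᵀ * Rh t)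
          + (R t)ᵀ * Rh t * skew (β t)) t) ∧
    (∀ t, HasDerivAt (fun s => (1/4) * (1 - (R s)ᵀ * Rh s).trace)
        ((1/2) * (vexPa ((R t)ᵀ * Rh t) ⬝ᵥ β t)) t) :=
  ⟨fun t => (Rtilde_and_normI_dynamics_general (hder t) (hderh t)).1,
    fun t => (Rtilde_and_normI_dynamics_general (hder t) (hderh t)).2⟩
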